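/- For every rooted tree-structure Φ, the k-linear map ρ : T_rt(Φ) → T_rt(Φ) ⊗ T_rt(Φ) defined by ρ((T,s)) = Σ_{e ∈ E(T)} (T_e^1, s|_{T_e^1}) ⊗ (T_e^2, s|_{T_e^2}) is a (left) pre-Lie comultiplication on T_rt(Φ). -/

import Mathlib

/-!
Statement 3: for every rooted tree-structure `Φ`, the map
`ρ((T,s)) = Σ_{e ∈ E(T)} (T_e^1, s|_{T_e^1}) ⊗ (T_e^2, s|_{T_e^2})` is a (left) pre-Lie
comultiplication on `T_rt(Φ)`, the free `k`-module on isomorphism classes of pairs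
`(T,s)` with `T` a rooted tree and `s ∈ Φ(T)`.
-/

universe u

open TensorProduct

noncomputable section

section PreLie

variable (k : Type*) [CommRing k] (g : Type*) [AddCommGroup g] [Module k g]

/-- `τ_{(12)}` on the triple tensor product `g ⊗ (g ⊗ g)`: `x⊗y⊗z ↦ y⊗x⊗z`. -/
def tau12 : g ⊗[k] (g ⊗[k] g) →ₗ[k] g ⊗[k] (g ⊗[k] g) :=
  (TensorProduct.assoc k g g g).toLinearMap ∘ₗ
    (LinearMap.rTensor g (TensorProduct.comm k g g).toLinearMap) ∘ₗ
    (TensorProduct.assoc k g g g).symm.toLinearMap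

variable {k g}

/-- `δ₀ : g → g ⊗ g` is a (left) pre-Lie comultiplication if
`(Id − τ_{(12)}) ∘ (δ₀ ⊗ Id − Id ⊗ δ₀) ∘ δ₀ = 0`. -/
def IsPreLieComul (δ : g →ₗ[k] g ⊗[k] g) : Prop :=
  (LinearMap.id - tau12 k g) ∘ₗ
      (((TensorProduct.assoc k g g g).toLinearMap ∘ₗ LinearMap.rTensor g δ)
        - LinearMap.lTensor g δ) ∘ₗ δ = 0

end PreLie

/-! ### Rooted trees

Rooted trees are represented by planar rooted trees (`PTree`); vertices are addressed by
the list of child-indices leading to them from the root (the root is `[]`), and an edge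
is identified with the address of its endpoint farther from the root. -/

/-- Planar rooted trees. -/
inductive PTree : Type
  | node : List PTree → PTree

/-- `IsVtx a T`: the address `a` is a vertex of `T`. -/
def IsVtx : List ℕ → PTree → Prop
  | [], _ => True
  | i :: a, .node l => ∃ u, l[i]? = some u ∧ IsVtx a u

mutual
/-- The list of all vertex addresses of a tree (the root is `[]`). -/
def vtxList : PTree → List (List ℕ)
  | .node l => [] :: vtxListL 0 l
/-- Auxiliary to `vtxList`. -/
def vtxListL : ℕ → List PTree → List (List ℕ)
  | _, [] => []
  | i, u :: ts => (vtxList u).map (i :: ·) ++ vtxListL (i+1) ts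
end

/-- The edges of a tree, identified with the non-root vertices. -/
def edgeList (T : PTree) : List (List ℕ) := (vtxList T).filter (· ≠ [])

/-- The subtree of `T` rooted at the vertex `a` (if `a` is a vertex). -/
def subAt : List ℕ → PTree → Option PTree
  | [], u => some u
  | i :: a, .node l => match l[i]? with
    | some u => subAt a u
    | none => none

/-- `T` with the subtree at the (non-root) vertex `a` removed. -/
def prune : List ℕ → PTree → PTree
  | [], u => u
  | [i], .node l => .node (l.eraseIdx i)
  | i :: j :: a, .node l => match l[i]? with
    | some u => .node (l.set i (prune (j :: a) u))
    | none => .node l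

/-- The canonical embedding of the vertices of `prune a T` into the vertices of `T`. -/
def pruneEmb (a : List ℕ) (b : List ℕ) : List ℕ :=
  match a.getLast? with
  | none => b
  | some i =>
      let a' := a.dropLast
      if a'.isPrefixOf b then
        match b.drop a'.length with
        | [] => b
        | j :: rest => if i ≤ j then a' ++ (j+1) :: rest else b
      else b

/-- An embedding of rooted trees `T → T'`, given as a map on vertex addresses: it is
injective on vertices, sends edges to edges, and sends the root of `T` to the vertex of
the image closest to the root of `T'` (i.e. the image of the root is an ancestor, in
fact a prefix, of every vertex of the image). -/
def IsEmbedding (T T' : PTree) (f : List ℕ → List ℕ) : Prop :=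
  (∀ a, IsVtx a T → IsVtx (f a) T') ∧
  (∀ a b, IsVtx a T → IsVtx b T → f a = f b → a = b) ∧
  (∀ a i, IsVtx (a ++ [i]) T →
    ((f (a ++ [i]) ≠ [] ∧ f a = (f (a ++ [i])).dropLast) ∨
     (f a ≠ [] ∧ f (a ++ [i]) = (f a).dropLast))) ∧
  (∀ a, IsVtx a T → f [] <+: f a)

/-- A rooted tree-structure: a contravariant functor from the category of rooted trees
and embeddings to sets. -/
structure TreeStructure : Type (u + 1) where
  /-- The set attached to each rooted tree. -/
  F : PTree → Type u
  /-- Restriction along an embedding. -/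
  res : ∀ {T T' : PTree} (f : List ℕ → List ℕ), IsEmbedding T T' f → F T' → F T
  res_id : ∀ (T : PTree) (h : IsEmbedding T T id) (x : F T), res id h x = x
  res_comp : ∀ {T T' T'' : PTree} (f g : List ℕ → List ℕ)
      (hf : IsEmbedding T T' f) (hg : IsEmbedding T' T'' g)
      (hgf : IsEmbedding T T'' (g ∘ f)) (x : F T'' ),
      res (g ∘ f) hgf x = res f hf (res g hg x)

/-- Pairs `(T, s)` with `T` a rooted tree and `s ∈ Φ(T)`. -/
def TS (Φ : TreeStructure.{u}) : Type u := Σ T : PTree, Φ.F T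

/-- Isomorphism of pairs: an isomorphism of rooted trees (a surjective embedding) whose
pullback carries the structure of one pair to that of the other. -/
def pairRel (Φ : TreeStructure.{u}) (x y : TS Φ) : Prop :=
  ∃ (f : List ℕ → List ℕ) (h : IsEmbedding x.1 y.1 f),
    (∀ b, IsVtx b y.1 → ∃ a, IsVtx a x.1 ∧ f a = b) ∧ Φ.res f h y.2 = x.2

/-- Isomorphism classes of pairs `(T, s)`. -/
def TSIso (Φ : TreeStructure.{u}) : Type u := Quot (pairRel Φ)

open scoped Classical

/-- The sum of a list of elements of an additive commutative monoid. -/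
def lsum {M : Type*} [AddCommMonoid M] (l : List M) : M := l.foldr (· + ·) 0

/-- The zero element of a tensor product. -/
def tzero (k : Type*) [CommRing k] (M N : Type*) [AddCommGroup M] [Module k M]
    [AddCommGroup N] [Module k N] : M ⊗[k] N := 0

variable (k : Type*) [CommRing k] (Φ : TreeStructure.{u})

/-- `T_rt(Φ)`: the free `k`-module on the isomorphism classes of pairs `(T,s)`. -/
abbrev TrtS := TSIso Φ →₀ k

/-- The summand of `ρ` corresponding to the edge `e` of the pair `(T,s)`: cut the edge
`e`, obtaining the subtree `T_e^1` at `e` (rooted at the endpoint of `e`) and the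
complementary tree `T_e^2` containing the root, each with the restricted structure. -/
def rhoSTerm (p : TS Φ) (e : List ℕ) : TrtS k Φ ⊗[k] TrtS k Φ :=
  match subAt e p.1 with
  | some T1 =>
      let T2 := prune e p.1
      if h : IsEmbedding T1 p.1 (fun b => e ++ b) ∧ IsEmbedding T2 p.1 (pruneEmb e) then
        Finsupp.single (Quot.mk (pairRel Φ) ⟨T1, Φ.res _ h.1 p.2⟩) (1 : k) ⊗ₜ[k]
          Finsupp.single (Quot.mk (pairRel Φ) ⟨T2, Φ.res _ h.2 p.2⟩) (1 : k)
      else tzero k _ _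
  | none => tzero k _ _

/-- The pre-Lie comultiplication
`ρ((T,s)) = Σ_{e ∈ E(T)} (T_e^1, s|_{T_e^1}) ⊗ (T_e^2, s|_{T_e^2})` on `T_rt(Φ)`
(computed on a representative pair; the result does not depend on the choice). -/
def rhoS : TrtS k Φ →ₗ[k] TrtS k Φ ⊗[k] TrtS k Φ :=
  Finsupp.lift (TrtS k Φ ⊗[k] TrtS k Φ) k (TSIso Φ) fun q =>
    lsum ((edgeList q.out.1).map (rhoSTerm k Φ q.out))

/-!
A subtree is determined by its vertex set, and the class of a restriction depends only on that
set. Cutting the edge `e` splits a vertex set `S` into `S ∩ descendants e` and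
`S \ descendants e`, so iterating `ρ` produces ordered pairs of edges `(e, e')`: the map `Id ⊗ ρ`
contributes the pairs for which `e'` is not a descendant of `e`, and `ρ ⊗ Id` those for which `e'`
is a proper ancestor of `e`. The difference is the sum over the pairs of incomparable edges, and
`τ_{(12)}`, which swaps the two branches cut off, only exchanges the two edges of such a pair.
-/

/-! ### Vertices and edges -/

theorem isVtx_nil (T : PTree) : IsVtx [] T := by
  cases T
  trivial

theorem IsVtx.of_append {a b : List ℕ} {T : PTree} (h : IsVtx (a ++ b) T) : IsVtx a T := by
  induction a generalizing T with
  | nil => exact isVtx_nil T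
  | cons i a ih =>
    cases T
    obtain ⟨u, hu, h⟩ := h
    exact ⟨u, hu, ih h⟩

theorem vtxListL_eq_flatMap (n : ℕ) (l : List PTree) :
    vtxListL n l = (l.zipIdx n).flatMap fun u => (vtxList u.1).map (u.2 :: ·) := by
  induction l generalizing n with
  | nil => rfl
  | cons u l ih => rw [vtxListL, ih, List.zipIdx_cons, List.flatMap_cons]

theorem mem_vtxList {a : List ℕ} {T : PTree} : a ∈ vtxList T ↔ IsVtx a T := by
  induction a generalizing T with
  | nil => cases T; simp [vtxList, isVtx_nil]
  | cons i a ih =>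
    cases T
    simp [vtxList, vtxListL_eq_flatMap, IsVtx, List.mem_zipIdx_iff_getElem?, ih]

theorem le_of_cons_mem_vtxListL {n i : ℕ} {a : List ℕ} {l : List PTree}
    (h : i :: a ∈ vtxListL n l) : n ≤ i := by
  rw [vtxListL_eq_flatMap, List.mem_flatMap] at h
  obtain ⟨⟨u, j⟩, hu, ha⟩ := h
  obtain ⟨b, -, hb⟩ := List.mem_map.1 ha
  exact (List.cons.inj hb).1 ▸ (List.mem_zipIdx hu).1

mutual

theorem nodup_vtxList : ∀ T : PTree, (vtxList T).Nodup
  | .node l => by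
    rw [vtxList, List.nodup_cons]
    exact ⟨by simp [vtxListL_eq_flatMap], nodup_vtxListL 0 l⟩

theorem nodup_vtxListL : ∀ (n : ℕ) (l : List PTree), (vtxListL n l).Nodup
  | _, [] => by simp [vtxListL]
  | n, u :: l => by
    rw [vtxListL, List.nodup_append']
    refine ⟨(nodup_vtxList u).map List.cons_injective, nodup_vtxListL (n + 1) l, ?_⟩
    rintro _ ha hl
    obtain ⟨a, -, rfl⟩ := List.mem_map.1 ha
    exact Nat.not_succ_le_self n (le_of_cons_mem_vtxListL hl)

end

namespace PTree

/-- The set of vertices of a tree. -/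
def vertices (T : PTree) : Set (List ℕ) := {a | IsVtx a T}

/-- The finite set of edges of a tree, an edge being identified, as in `edgeList`, with its
endpoint farther from the root. -/
def edges (T : PTree) : Finset (List ℕ) := (edgeList T).toFinset

theorem nil_mem_vertices (T : PTree) : [] ∈ T.vertices := isVtx_nil T

theorem mem_edges {T : PTree} {e : List ℕ} : e ∈ T.edges ↔ e ∈ T.vertices ∧ e ≠ [] := by
  simp [edges, edgeList, mem_vtxList, vertices]

theorem lsum_map_edgeList {M : Type*} [AddCommMonoid M] (T : PTree) (f : List ℕ → M) :
    lsum ((edgeList T).map f) = ∑ e ∈ T.edges, f e :=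
  (List.sum_toFinset f ((nodup_vtxList T).filter _)).symm

end PTree

/-- The set of addresses having `e` as an ancestor, `e` itself included. -/
def descendants (e : List ℕ) : Set (List ℕ) := {b | e <+: b}

theorem mem_descendants {a e : List ℕ} : a ∈ descendants e ↔ e <+: a := Iff.rfl

theorem descendants_subset_descendants {a b : List ℕ} :
    descendants b ⊆ descendants a ↔ a <+: b :=
  ⟨fun h => h (mem_descendants.2 List.prefix_rfl), fun h _ hc => h.trans hc⟩

theorem disjoint_descendants {a b : List ℕ} (hab : ¬ a <+: b) (hba : ¬ b <+: a) :
    Disjoint (descendants a) (descendants b) :=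
  Set.disjoint_left.2 fun _ ha hb => (List.prefix_or_prefix_of_prefix ha hb).elim hab hba

/-! ### The two trees obtained by cutting an edge -/

theorem exists_subAt_eq_some {e : List ℕ} {T : PTree} (he : e ∈ T.vertices) :
    ∃ T₁, subAt e T = some T₁ := by
  induction e generalizing T with
  | nil => exact ⟨T, by rw [subAt]⟩
  | cons i e ih =>
    cases T
    obtain ⟨u, hu, he⟩ := he
    simpa only [subAt, hu] using ih he

theorem vertices_eq_preimage_append {e : List ℕ} {T T₁ : PTree} (h : subAt e T = some T₁) :
    T₁.vertices = (e ++ ·) ⁻¹' T.vertices := by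
  induction e generalizing T with
  | nil =>
    rw [subAt, Option.some.injEq] at h
    rw [h]
    rfl
  | cons i e ih =>
    obtain ⟨l⟩ := T
    cases hu : l[i]? with
    | none => simp [subAt, hu] at h
    | some u =>
      simp only [subAt, hu] at h
      ext b
      simpa [PTree.vertices, IsVtx, hu] using Set.ext_iff.1 (ih h) b

theorem range_append_eq_descendants (e : List ℕ) : Set.range (e ++ ·) = descendants e :=
  rfl

theorem image_append_vertices {e : List ℕ} {T T₁ : PTree} (h : subAt e T = some T₁) :
    (e ++ ·) '' T₁.vertices = T.vertices ∩ descendants e := by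
  rw [vertices_eq_preimage_append h, Set.image_preimage_eq_inter_range,
    range_append_eq_descendants]

/-- The increasing enumeration of the natural numbers other than `i`: the effect on the indices of
the siblings of removing the `i`-th child. -/
def skipIndex (i j : ℕ) : ℕ := if i ≤ j then j + 1 else j

theorem skipIndex_injective (i : ℕ) : Function.Injective (skipIndex i) := by
  intro j j' h
  unfold skipIndex at h
  split_ifs at h <;> omega

theorem mem_range_skipIndex {i j : ℕ} : j ∈ Set.range (skipIndex i) ↔ i ≠ j := by
  constructor
  · rintro ⟨m, rfl⟩
    unfold skipIndex
    split_ifs <;> omega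
  · intro h
    rcases h.lt_or_gt with hij | hji
    · exact ⟨j - 1, by rw [skipIndex, if_pos (by omega)]; omega⟩
    · exact ⟨j, if_neg hji.not_ge⟩

theorem getElem?_eraseIdx_eq_skipIndex {α : Type*} (l : List α) (i j : ℕ) :
    (l.eraseIdx i)[j]? = l[skipIndex i j]? := by
  rw [List.getElem?_eraseIdx, skipIndex]
  split_ifs <;> first | rfl | omega

theorem pruneEmb_nil (e : List ℕ) : pruneEmb e [] = [] := by
  unfold pruneEmb
  cases e.getLast? <;> simp

theorem pruneEmb_singleton_cons (i j : ℕ) (b : List ℕ) :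
    pruneEmb [i] (j :: b) = skipIndex i j :: b := by
  simp only [pruneEmb, skipIndex, List.getLast?_singleton, List.dropLast_singleton]
  split_ifs <;> simp_all

theorem pruneEmb_cons_cons {e : List ℕ} (he : e ≠ []) (i j : ℕ) (b : List ℕ) :
    pruneEmb (i :: e) (j :: b) = if i = j then j :: pruneEmb e b else j :: b := by
  obtain ⟨a, m, rfl⟩ := (List.eq_nil_or_concat' e).resolve_left he
  rw [← List.cons_append, pruneEmb, pruneEmb]
  simp only [List.getLast?_concat, List.dropLast_concat]
  by_cases hij : i = j
  · subst hij
    cases h : b.drop a.length with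
    | nil => simp [h]
    | cons n c =>
      simp only [List.isPrefixOf_cons_cons_self, List.length_cons, List.drop_succ_cons, h]
      split_ifs <;> rfl
  · simp [hij]

theorem pruneEmb_injective {e : List ℕ} (he : e ≠ []) : Function.Injective (pruneEmb e) := by
  induction e, he using List.recNeNil with
  | singleton i =>
    rintro (_ | ⟨j, b⟩) (_ | ⟨j', b'⟩) h <;>
      simp_all [pruneEmb_nil, pruneEmb_singleton_cons, (skipIndex_injective i).eq_iff]
  | cons i e he ih =>
    rintro (_ | ⟨j, b⟩) (_ | ⟨j', b'⟩) h <;>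
      simp only [pruneEmb_nil, pruneEmb_cons_cons he] at h <;> grind [Function.Injective]

theorem range_pruneEmb {e : List ℕ} (he : e ≠ []) :
    Set.range (pruneEmb e) = (descendants e)ᶜ := by
  ext b
  induction e, he using List.recNeNil generalizing b with
  | singleton i =>
    cases b with
    | nil => simpa [mem_descendants] using ⟨[], pruneEmb_nil [i]⟩
    | cons j b =>
      have hskip : j :: b ∈ Set.range (pruneEmb [i]) ↔ j ∈ Set.range (skipIndex i) := by
        constructor
        · rintro ⟨_ | ⟨m, c⟩, h⟩
          · simp [pruneEmb_nil] at h
          · rw [pruneEmb_singleton_cons] at h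
            exact ⟨m, (List.cons.inj h).1⟩
        · rintro ⟨m, rfl⟩
          exact ⟨m :: b, pruneEmb_singleton_cons i m b⟩
      rw [hskip, mem_range_skipIndex]
      simp [mem_descendants]
  | cons i e he ih =>
    cases b with
    | nil => simpa [mem_descendants] using ⟨[], pruneEmb_nil (i :: e)⟩
    | cons j b =>
      have hcons : j :: b ∈ Set.range (pruneEmb (i :: e)) ↔
          i = j → b ∈ Set.range (pruneEmb e) := by
        constructor
        · rintro ⟨_ | ⟨m, c⟩, h⟩ rfl <;> grind [pruneEmb_nil, pruneEmb_cons_cons]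
        · intro h
          by_cases hij : i = j
          · obtain ⟨c, rfl⟩ := h hij
            exact ⟨j :: c, by rw [pruneEmb_cons_cons he, if_pos hij]⟩
          · exact ⟨j :: b, by rw [pruneEmb_cons_cons he, if_neg hij]⟩
      rw [hcons, ih]
      simp [mem_descendants]

theorem exists_pruneEmb_append_singleton {e : List ℕ} (he : e ≠ []) (b : List ℕ) (j : ℕ) :
    ∃ j', pruneEmb e (b ++ [j]) = pruneEmb e b ++ [j'] := by
  induction e, he using List.recNeNil generalizing b with
  | singleton i => cases b <;> simp [pruneEmb_nil, pruneEmb_singleton_cons]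
  | cons i e he ih =>
    cases b with
    | nil => simp [pruneEmb_nil, pruneEmb_cons_cons he]
    | cons m b =>
      rw [List.cons_append, pruneEmb_cons_cons he, pruneEmb_cons_cons he]
      split_ifs
      · simpa using ih b
      · exact ⟨j, rfl⟩

theorem prune_cons {e : List ℕ} (he : e ≠ []) (i : ℕ) (l : List PTree) :
    prune (i :: e) (.node l) = .node (l.modify i (prune e)) := by
  obtain ⟨j, a, rfl⟩ := List.exists_cons_of_ne_nil he
  rw [prune]
  cases h : l[i]? with
  | none => simp [List.modify_eq_self, List.getElem?_eq_none_iff.1 h]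
  | some u => simp [List.modify_eq_set_getElem?, h]

theorem vertices_prune {e : List ℕ} (he : e ≠ []) (T : PTree) :
    (prune e T).vertices = pruneEmb e ⁻¹' T.vertices := by
  ext b
  induction e, he using List.recNeNil generalizing b T with
  | singleton i =>
    obtain ⟨l⟩ := T
    cases b with
    | nil => simp [pruneEmb_nil, PTree.nil_mem_vertices]
    | cons j b =>
      simp [pruneEmb_singleton_cons, prune, PTree.vertices, IsVtx, getElem?_eraseIdx_eq_skipIndex]
  | cons i e he ih =>
    obtain ⟨l⟩ := T
    cases b with
    | nil => simp [pruneEmb_nil, PTree.nil_mem_vertices]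
    | cons j b =>
      have ih' : ∀ u, IsVtx b (prune e u) ↔ IsVtx (pruneEmb e b) u := fun u => ih u b
      rw [prune_cons he, Set.mem_preimage, pruneEmb_cons_cons he]
      by_cases hij : i = j <;> simp [PTree.vertices, IsVtx, hij, ih']

theorem image_pruneEmb_vertices {e : List ℕ} (he : e ≠ []) (T : PTree) :
    pruneEmb e '' (prune e T).vertices = T.vertices \ descendants e := by
  rw [vertices_prune he, Set.image_preimage_eq_inter_range, range_pruneEmb he, Set.sdiff_eq]

/-! ### Embeddings -/

section Embedding

variable {T T' T'' : PTree} {f g : List ℕ → List ℕ}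

/-- Maps preserving the parent relation automatically send the root to the vertex of the image
closest to the root. -/
theorem isEmbedding_of_append_singleton (hmaps : Set.MapsTo f T.vertices T'.vertices)
    (hinj : Set.InjOn f T.vertices)
    (hchild : ∀ a i, a ++ [i] ∈ T.vertices → ∃ j, f (a ++ [i]) = f a ++ [j]) :
    IsEmbedding T T' f := by
  refine ⟨hmaps, fun a b ha hb h => hinj ha hb h, fun a i h => Or.inl ?_, fun a ha => ?_⟩
  · obtain ⟨j, hj⟩ := hchild a i h
    simp [hj]
  · induction a using List.reverseRecOn with
    | nil => exact List.prefix_rfl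
    | append_singleton a i ih =>
      obtain ⟨j, hj⟩ := hchild a i ha
      rw [hj]
      exact (ih ha.of_append).trans (List.prefix_append _ _)

namespace IsEmbedding

theorem mapsTo (hf : IsEmbedding T T' f) : Set.MapsTo f T.vertices T'.vertices := hf.1

theorem injOn (hf : IsEmbedding T T' f) : Set.InjOn f T.vertices :=
  fun a ha b hb => hf.2.1 a b ha hb

theorem map_nil_prefix (hf : IsEmbedding T T' f) {a : List ℕ} (ha : a ∈ T.vertices) :
    f [] <+: f a :=
  hf.2.2.2 a ha

theorem exists_map_append_singleton (hf : IsEmbedding T T' f) {a : List ℕ} {i : ℕ}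
    (ha : a ++ [i] ∈ T.vertices) : ∃ j, f (a ++ [i]) = f a ++ [j] := by
  induction a using List.reverseRecOn generalizing i with
  | nil =>
    rcases hf.2.2.1 [] i ha with ⟨hne, hf_nil⟩ | ⟨hne, hf_child⟩
    · exact ⟨_, by rw [hf_nil, List.dropLast_append_getLast hne]⟩
    · have hlen := (hf.map_nil_prefix ha).length_le
      rw [hf_child, List.length_dropLast] at hlen
      have := List.length_pos_iff.2 hne
      omega
  | append_singleton b m ih =>
    rcases hf.2.2.1 _ i ha with ⟨hne, hf_parent⟩ | ⟨-, hf_child⟩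
    · exact ⟨_, by rw [hf_parent, List.dropLast_append_getLast hne]⟩
    · -- Otherwise `b ++ [m, i]` and `b` would have the same image.
      obtain ⟨j, hj⟩ := ih ha.of_append
      rw [hj, List.dropLast_concat] at hf_child
      have := hf.injOn ha ha.of_append.of_append hf_child
      simp at this

theorem map_prefix_map_iff (hf : IsEmbedding T T' f) {a b : List ℕ} (ha : a ∈ T.vertices)
    (hb : b ∈ T.vertices) : f a <+: f b ↔ a <+: b := by
  induction b using List.reverseRecOn with
  | nil =>
    rw [List.prefix_nil]
    refine ⟨fun h => hf.injOn ha hb ?_, by rintro rfl; rfl⟩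
    exact h.eq_of_length_le (hf.map_nil_prefix ha).length_le
  | append_singleton b i ih =>
    obtain ⟨j, hj⟩ := hf.exists_map_append_singleton hb
    rw [hj, List.prefix_concat_iff, ← hj, hf.injOn.eq_iff ha hb, ih hb.of_append,
      List.prefix_concat_iff]

theorem exists_eq_append_singleton_of_map_eq (hf : IsEmbedding T T' f) {a b : List ℕ} {j : ℕ}
    (ha : a ∈ T.vertices) (hb : b ∈ T.vertices) (h : f b = f a ++ [j]) :
    ∃ i, b = a ++ [i] := by
  rcases List.eq_nil_or_concat' b with rfl | ⟨b, i, rfl⟩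
  · have := (hf.map_nil_prefix ha).length_le
    simp [h] at this
  · obtain ⟨m, hm⟩ := hf.exists_map_append_singleton hb
    rw [hm] at h
    rw [hf.injOn hb.of_append ha (List.append_inj_left' h rfl)]
    exact ⟨i, rfl⟩

protected theorem comp (hg : IsEmbedding T' T'' g) (hf : IsEmbedding T T' f) :
    IsEmbedding T T'' (g ∘ f) := by
  refine isEmbedding_of_append_singleton (hg.mapsTo.comp hf.mapsTo)
    (hg.injOn.comp hf.injOn hf.mapsTo) fun a i ha => ?_
  obtain ⟨j, hj⟩ := hf.exists_map_append_singleton ha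
  obtain ⟨m, hm⟩ := hg.exists_map_append_singleton (hj ▸ hf.mapsTo ha)
  exact ⟨m, by rw [Function.comp_apply, hj, hm, Function.comp_apply]⟩

protected theorem congr (hf : IsEmbedding T T' f) (h : Set.EqOn f g T.vertices) :
    IsEmbedding T T' g := by
  refine isEmbedding_of_append_singleton (hf.mapsTo.congr h) (hf.injOn.congr h) fun a i ha => ?_
  rw [← h ha, ← h (show a ∈ T.vertices from ha.of_append)]
  exact hf.exists_map_append_singleton ha

protected theorem id (T : PTree) : IsEmbedding T T id :=
  isEmbedding_of_append_singleton (Set.mapsTo_id _) (Set.injOn_id _) fun _ i _ => ⟨i, rfl⟩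

theorem invFunOn_comp {T₁ T₂ : PTree} (hf : IsEmbedding T₁ T f) (hg : IsEmbedding T₂ T g)
    (hfg : f '' T₁.vertices ⊆ g '' T₂.vertices) :
    IsEmbedding T₁ T₂ (Function.invFunOn g T₂.vertices ∘ f) := by
  have hmem : ∀ a ∈ T₁.vertices, Function.invFunOn g T₂.vertices (f a) ∈ T₂.vertices :=
    fun a ha => Function.invFunOn_mem (hfg ⟨a, ha, rfl⟩)
  have heq : ∀ a ∈ T₁.vertices, g (Function.invFunOn g T₂.vertices (f a)) = f a :=
    fun a ha => Function.invFunOn_eq (hfg ⟨a, ha, rfl⟩)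
  refine isEmbedding_of_append_singleton hmem (fun a ha b hb hab => ?_) fun a i ha => ?_
  · exact hf.injOn ha hb (by rw [← heq a ha, ← heq b hb]; exact congrArg g hab)
  · have ha' : a ∈ T₁.vertices := ha.of_append
    obtain ⟨j, hj⟩ := hf.exists_map_append_singleton ha
    refine hg.exists_eq_append_singleton_of_map_eq (hmem a ha') (hmem _ ha) (j := j) ?_
    rw [Function.comp_apply, Function.comp_apply, heq a ha', heq _ ha, hj]

theorem vertices_inter_preimage_descendants (hf : IsEmbedding T T' f) {e : List ℕ}
    (he : e ∈ T.vertices) :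
    T.vertices ∩ f ⁻¹' descendants (f e) = T.vertices ∩ descendants e := by
  ext a
  exact and_congr_right fun ha => hf.map_prefix_map_iff he ha

theorem image_inter_descendants (hf : IsEmbedding T T' f) {e : List ℕ} (he : e ∈ T.vertices) :
    f '' (T.vertices ∩ descendants e) = f '' T.vertices ∩ descendants (f e) := by
  rw [← hf.vertices_inter_preimage_descendants he, Set.image_inter_preimage]

theorem image_sdiff_descendants (hf : IsEmbedding T T' f) {e : List ℕ} (he : e ∈ T.vertices) :
    f '' (T.vertices \ descendants e) = f '' T.vertices \ descendants (f e) := by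
  rw [← Set.sdiff_self_inter, ← hf.vertices_inter_preimage_descendants he, Set.sdiff_self_inter,
    Set.image_sdiff_preimage]

end IsEmbedding

theorem isEmbedding_append {e : List ℕ} {T₁ : PTree} (h : subAt e T = some T₁) :
    IsEmbedding T₁ T (e ++ ·) :=
  isEmbedding_of_append_singleton (vertices_eq_preimage_append h).subset
    (List.append_right_injective e).injOn fun a i _ => ⟨i, (List.append_assoc e a [i]).symm⟩

theorem isEmbedding_pruneEmb {e : List ℕ} (he : e ≠ []) :
    IsEmbedding (prune e T) T (pruneEmb e) :=
  isEmbedding_of_append_singleton (vertices_prune he T).subset (pruneEmb_injective he).injOn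
    fun a i _ => exists_pruneEmb_append_singleton he a i

end Embedding

/-! ### Subtrees as vertex sets -/

namespace PTree

variable {T T' : PTree}

/-- `T.IsSubtree S` says that `S` is the vertex set of a subtree of `T`. -/
def IsSubtree (T : PTree) (S : Set (List ℕ)) : Prop :=
  ∃ (T₁ : PTree) (f : List ℕ → List ℕ), IsEmbedding T₁ T f ∧ f '' T₁.vertices = S

theorem isSubtree_inter_descendants {e : List ℕ} (he : e ∈ T.vertices) :
    T.IsSubtree (T.vertices ∩ descendants e) := by
  obtain ⟨T₁, h⟩ := exists_subAt_eq_some he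
  exact ⟨T₁, _, isEmbedding_append h, image_append_vertices h⟩

theorem isSubtree_sdiff_descendants {e : List ℕ} (he : e ≠ []) :
    T.IsSubtree (T.vertices \ descendants e) :=
  ⟨prune e T, _, isEmbedding_pruneEmb he, image_pruneEmb_vertices he T⟩

/-- The edges of the subtree of `T` with vertex set `S`. The last condition excludes the root of
this subtree, which names an edge of `T` leading out of it. -/
def edgesWithin (T : PTree) (S : Set (List ℕ)) : Finset (List ℕ) :=
  {e ∈ T.edges | e ∈ S ∧ ¬ S ⊆ descendants e}

theorem mem_edgesWithin {S : Set (List ℕ)} {e : List ℕ} :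
    e ∈ T.edgesWithin S ↔ e ∈ T.edges ∧ e ∈ S ∧ ¬ S ⊆ descendants e :=
  Finset.mem_filter

theorem edgesWithin_vertices (T : PTree) : T.edgesWithin T.vertices = T.edges :=
  Finset.filter_true_of_mem fun _ he =>
    ⟨(mem_edges.1 he).1, fun h => (mem_edges.1 he).2 (List.prefix_nil.1 (h T.nil_mem_vertices))⟩

theorem edgesWithin_inter_descendants {e : List ℕ} (he : e ∈ T.vertices) :
    T.edgesWithin (T.vertices ∩ descendants e) = {e' ∈ T.edges | e <+: e' ∧ e' ≠ e} := by
  ext e'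
  rw [mem_edgesWithin, Finset.mem_filter]
  refine and_congr_right fun he' => ?_
  rw [Set.mem_inter_iff, and_iff_right (mem_edges.1 he').1]
  refine and_congr_right fun hee' => not_congr ⟨fun h => ?_, ?_⟩
  · have hpre : e' <+: e := h ⟨he, List.prefix_rfl⟩
    exact hpre.eq_of_length_le hee'.length_le
  · rintro rfl
    exact Set.inter_subset_right

theorem edgesWithin_sdiff_descendants {e : List ℕ} (he : e ≠ []) :
    T.edgesWithin (T.vertices \ descendants e) = {e' ∈ T.edges | ¬ e <+: e'} := by
  ext e'
  rw [mem_edgesWithin, Finset.mem_filter]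
  refine and_congr_right fun he' => ?_
  rw [Set.mem_sdiff, and_iff_right (mem_edges.1 he').1]
  refine and_iff_left fun h => (mem_edges.1 he').2 (List.prefix_nil.1 (h ?_))
  exact ⟨T.nil_mem_vertices, fun h => he (List.prefix_nil.1 h)⟩

theorem image_edges {f : List ℕ → List ℕ} (hf : IsEmbedding T T' f) :
    T.edges.image f = T'.edgesWithin (f '' T.vertices) := by
  have himage : ∀ a ∈ T.vertices, f '' T.vertices ⊆ descendants (f a) ↔ a = [] := by
    intro a ha
    rw [Set.image_subset_iff]
    constructor
    · intro h
      exact List.prefix_nil.1 ((hf.map_prefix_map_iff ha T.nil_mem_vertices).1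
        (h T.nil_mem_vertices))
    · rintro rfl b hb
      exact hf.map_nil_prefix hb
  ext e
  simp only [Finset.mem_image, mem_edgesWithin, mem_edges]
  constructor
  · rintro ⟨a, ⟨ha, hne⟩, rfl⟩
    have hsub : ¬ f '' T.vertices ⊆ descendants (f a) := mt (himage a ha).1 hne
    exact ⟨⟨hf.mapsTo ha, fun h => hsub (h ▸ fun _ _ => List.nil_prefix)⟩, ⟨a, ha, rfl⟩, hsub⟩
  · rintro ⟨-, ⟨a, ha, rfl⟩, hsub⟩
    exact ⟨a, ⟨ha, mt (himage a ha).2 hsub⟩, rfl⟩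

end PTree

/-! ### The class of a restriction -/

section RestrictClass

variable {Φ} {T T' : PTree} {f : List ℕ → List ℕ}

/-- The isomorphism class of the pair `(T, s)`. -/
def isoClass (s : Φ.F T) : TSIso Φ := Quot.mk (pairRel Φ) ⟨T, s⟩

theorem exists_eq_isoClass (q : TSIso Φ) : ∃ (T : PTree) (s : Φ.F T), q = isoClass s := by
  obtain ⟨⟨T, s⟩, rfl⟩ := Quot.exists_rep q
  exact ⟨T, s, rfl⟩

theorem isoClass_res_of_image_eq_vertices (hf : IsEmbedding T T' f)
    (h : f '' T.vertices = T'.vertices) (s : Φ.F T') : isoClass (Φ.res f hf s) = isoClass s :=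
  Quot.sound ⟨f, hf, fun _ hb => h.superset hb, rfl⟩

theorem exists_retraction_vertices (T : PTree) :
    ∃ r, IsEmbedding T T r ∧ r '' T.vertices = T.vertices ∧ ∀ a, r a ∈ T.vertices := by
  have heq : Set.EqOn id (fun a => if a ∈ T.vertices then a else []) T.vertices :=
    fun a ha => (if_pos ha).symm
  refine ⟨_, (IsEmbedding.id T).congr heq, heq.symm.image_eq.trans (Set.image_id _), fun a => ?_⟩
  split_ifs with ha
  exacts [ha, T.nil_mem_vertices]

/-- The isomorphism `m` satisfies `g ∘ m = f` only on vertices, whereas functoriality of `Φ` needs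
an equality of functions on all addresses: hence the precomposition with a retraction onto the
vertices. -/
theorem isoClass_res_eq_of_image_eq {T₁ T₂ : PTree} {g : List ℕ → List ℕ}
    (hf : IsEmbedding T₁ T f) (hg : IsEmbedding T₂ T g)
    (h : f '' T₁.vertices = g '' T₂.vertices) (s : Φ.F T) :
    isoClass (Φ.res f hf s) = isoClass (Φ.res g hg s) := by
  obtain ⟨r, hr, hr_image, hr_mem⟩ := exists_retraction_vertices T₁
  let m := Function.invFunOn g T₂.vertices ∘ f
  have hm : IsEmbedding T₁ T₂ m := hf.invFunOn_comp hg h.subset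
  have hfactor : f ∘ r = g ∘ m ∘ r :=
    funext fun a => (Function.invFunOn_eq (h.subset ⟨r a, hr_mem a, rfl⟩)).symm
  have hm_image : (m ∘ r) '' T₁.vertices = T₂.vertices := by
    rw [Set.image_comp, hr_image, Set.image_comp, h, hg.injOn.leftInvOn_invFunOn.image_image]
  calc isoClass (Φ.res f hf s)
      = isoClass (Φ.res r hr (Φ.res f hf s)) :=
        (isoClass_res_of_image_eq_vertices hr hr_image _).symm
    _ = isoClass (Φ.res (f ∘ r) (hf.comp hr) s) := by rw [← Φ.res_comp]
    _ = isoClass (Φ.res (g ∘ m ∘ r) (hg.comp (hm.comp hr)) s) := by simp only [hfactor]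
    _ = isoClass (Φ.res (m ∘ r) (hm.comp hr) (Φ.res g hg s)) := by rw [← Φ.res_comp]
    _ = isoClass (Φ.res g hg s) := isoClass_res_of_image_eq_vertices _ hm_image _

/-- The class of the restriction of `(T, s)` to its subtree with vertex set `S`, and by convention
the class of `(T, s)` when `S` is not the vertex set of a subtree. -/
def restrictClass (s : Φ.F T) (S : Set (List ℕ)) : TSIso Φ :=
  if h : T.IsSubtree S then isoClass (Φ.res _ h.choose_spec.choose_spec.1 s) else isoClass s

theorem restrictClass_image (s : Φ.F T') (hf : IsEmbedding T T' f) :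
    restrictClass s (f '' T.vertices) = isoClass (Φ.res f hf s) := by
  have h : T'.IsSubtree (f '' T.vertices) := ⟨T, f, hf, rfl⟩
  rw [restrictClass, dif_pos h]
  exact isoClass_res_eq_of_image_eq _ _ h.choose_spec.choose_spec.2 s

theorem restrictClass_res (s : Φ.F T') (hf : IsEmbedding T T' f) {S : Set (List ℕ)}
    (hS : T.IsSubtree S) : restrictClass (Φ.res f hf s) S = restrictClass s (f '' S) := by
  obtain ⟨T₁, g, hg, rfl⟩ := hS
  rw [restrictClass_image _ hg, ← Set.image_comp, restrictClass_image s (hf.comp hg), Φ.res_comp]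

/-- The basis element of `T_rt(Φ)` given by the restriction of `(T, s)` to its subtree with vertex
set `S`. -/
def restrictElt (s : Φ.F T) (S : Set (List ℕ)) : TrtS k Φ := Finsupp.single (restrictClass s S) 1

end RestrictClass

/-! ### The comultiplication in terms of vertex sets -/

section CutSum

variable {Φ} {T T' : PTree}

/-- The sum over the edges `e` of the subtree of `T` with vertex set `S` of the tensors of the two
restrictions obtained by cutting `e`. It computes `ρ` on the restriction of `(T, s)` to `S`. -/
def cutSum (s : Φ.F T) (S : Set (List ℕ)) : TrtS k Φ ⊗[k] TrtS k Φ :=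
  ∑ e ∈ T.edgesWithin S, restrictElt k s (S ∩ descendants e) ⊗ₜ restrictElt k s (S \ descendants e)

theorem cutSum_res (s : Φ.F T') {f : List ℕ → List ℕ} (hf : IsEmbedding T T' f) :
    cutSum k (Φ.res f hf s) T.vertices = cutSum k s (f '' T.vertices) := by
  rw [cutSum, cutSum, T.edgesWithin_vertices, ← PTree.image_edges hf, Finset.sum_image
    fun a ha b hb => hf.injOn (PTree.mem_edges.1 ha).1 (PTree.mem_edges.1 hb).1]
  refine Finset.sum_congr rfl fun e he => ?_
  obtain ⟨hv, hne⟩ := PTree.mem_edges.1 he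
  simp only [restrictElt, restrictClass_res s hf (PTree.isSubtree_inter_descendants hv),
    restrictClass_res s hf (PTree.isSubtree_sdiff_descendants hne),
    hf.image_inter_descendants hv, hf.image_sdiff_descendants hv]

theorem cutSum_vertices_eq_of_pairRel {p q : TS Φ} (h : pairRel Φ p q) :
    cutSum k p.2 p.1.vertices = cutSum k q.2 q.1.vertices := by
  obtain ⟨f, hf, hsurj, h⟩ := h
  rw [← h, cutSum_res, hf.mapsTo.image_subset.antisymm hsurj]

theorem cutSum_vertices_eq_of_isoClass_eq {s : Φ.F T} {s' : Φ.F T'}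
    (h : isoClass s = isoClass s') : cutSum k s T.vertices = cutSum k s' T'.vertices :=
  congrArg (Quot.lift (fun p : TS Φ => cutSum k p.2 p.1.vertices)
    fun _ _ => cutSum_vertices_eq_of_pairRel k) h

theorem rhoSTerm_eq_tmul (s : Φ.F T) {e : List ℕ} (he : e ∈ T.edges) :
    rhoSTerm k Φ ⟨T, s⟩ e = restrictElt k s (T.vertices ∩ descendants e) ⊗ₜ
      restrictElt k s (T.vertices \ descendants e) := by
  obtain ⟨hv, hne⟩ := PTree.mem_edges.1 he
  obtain ⟨T₁, hT₁⟩ := exists_subAt_eq_some hv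
  have hbranch := isEmbedding_append hT₁
  have hprune := isEmbedding_pruneEmb (T := T) hne
  rw [restrictElt, restrictElt, ← image_append_vertices hT₁, ← image_pruneEmb_vertices hne,
    restrictClass_image s hbranch, restrictClass_image s hprune]
  simp only [rhoSTerm, hT₁]
  exact dif_pos ⟨hbranch, hprune⟩

theorem lsum_rhoSTerm (s : Φ.F T) :
    lsum ((edgeList T).map (rhoSTerm k Φ ⟨T, s⟩)) = cutSum k s T.vertices := by
  rw [T.lsum_map_edgeList, cutSum, T.edgesWithin_vertices]
  exact Finset.sum_congr rfl fun e he => rhoSTerm_eq_tmul k s he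

theorem rhoS_single_isoClass (s : Φ.F T) :
    rhoS k Φ (Finsupp.single (isoClass s) 1) = cutSum k s T.vertices := by
  have hout : isoClass (isoClass s).out.2 = isoClass s := Quot.out_eq (isoClass s)
  calc rhoS k Φ (Finsupp.single (isoClass s) 1)
      = (1 : k) • lsum ((edgeList (isoClass s).out.1).map (rhoSTerm k Φ (isoClass s).out)) :=
        (Finsupp.lift_apply ..).trans (Finsupp.sum_single_index (zero_smul k _))
    _ = cutSum k (isoClass s).out.2 (isoClass s).out.1.vertices := by
        rw [one_smul]
        exact lsum_rhoSTerm k _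
    _ = cutSum k s T.vertices := cutSum_vertices_eq_of_isoClass_eq k hout

theorem rhoS_restrictElt (s : Φ.F T) {S : Set (List ℕ)} (hS : T.IsSubtree S) :
    rhoS k Φ (restrictElt k s S) = cutSum k s S := by
  obtain ⟨T₁, f, hf, rfl⟩ := hS
  rw [restrictElt, restrictClass_image s hf, rhoS_single_isoClass, cutSum_res]

end CutSum

/-! ### The coassociator -/

section Coassociator

variable {k} {M : Type*} [AddCommGroup M] [Module k M]

theorem tau12_tmul (x y z : M) : tau12 k M (x ⊗ₜ (y ⊗ₜ z)) = y ⊗ₜ (x ⊗ₜ z) := rfl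

/-- The failure `(Id ⊗ δ - δ ⊗ Id) ∘ δ` of coassociativity of a comultiplication `δ`, with the sign
opposite to that in `IsPreLieComul`. -/
def coassociator (δ : M →ₗ[k] M ⊗[k] M) : M →ₗ[k] M ⊗[k] (M ⊗[k] M) :=
  (LinearMap.lTensor M δ - (TensorProduct.assoc k M M M).toLinearMap ∘ₗ LinearMap.rTensor M δ) ∘ₗ δ

theorem coassociator_apply (δ : M →ₗ[k] M ⊗[k] M) (x : M) :
    coassociator δ x = LinearMap.lTensor M δ (δ x) -
      TensorProduct.assoc k M M M (LinearMap.rTensor M δ (δ x)) := rfl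

theorem isPreLieComul_iff_tau12_comp_coassociator {δ : M →ₗ[k] M ⊗[k] M} :
    IsPreLieComul δ ↔ tau12 k M ∘ₗ coassociator δ = coassociator δ := by
  rw [IsPreLieComul, ← neg_sub (LinearMap.lTensor M δ), LinearMap.neg_comp, LinearMap.comp_neg,
    neg_eq_zero, ← coassociator, LinearMap.sub_comp, LinearMap.id_comp, sub_eq_zero, eq_comm]

end Coassociator

section CutTerm

variable {Φ} {T : PTree}

/-- The term of the iterated comultiplication in which the edge `e` is cut first, and then the edge
`e'` of the component of the root. -/
def cutTerm (s : Φ.F T) (e e' : List ℕ) : TrtS k Φ ⊗[k] (TrtS k Φ ⊗[k] TrtS k Φ) :=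
  restrictElt k s (T.vertices ∩ descendants e) ⊗ₜ
    (restrictElt k s ((T.vertices \ descendants e) ∩ descendants e') ⊗ₜ
      restrictElt k s ((T.vertices \ descendants e) \ descendants e'))

theorem tau12_cutTerm (s : Φ.F T) {e e' : List ℕ} (h : ¬ e <+: e') (h' : ¬ e' <+: e) :
    tau12 k (TrtS k Φ) (cutTerm k s e e') = cutTerm k s e' e := by
  have hbranch : ∀ {a b : List ℕ}, ¬ a <+: b → ¬ b <+: a →
      (T.vertices \ descendants a) ∩ descendants b = T.vertices ∩ descendants b := by
    intro a b hab hba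
    rw [← Set.inter_sdiff_right_comm, Set.inter_sdiff_assoc,
      (disjoint_descendants hba hab).sdiff_eq_left]
  rw [cutTerm, tau12_tmul, cutTerm, hbranch h h', hbranch h' h, Set.sdiff_sdiff_comm]

/-- Cutting `e` and then an edge `e'` of the branch cut off amounts to cutting `e'` first. -/
theorem assoc_tmul_eq_cutTerm (s : Φ.F T) {e e' : List ℕ} (h : e <+: e') :
    TensorProduct.assoc k _ _ _
      ((restrictElt k s ((T.vertices ∩ descendants e) ∩ descendants e') ⊗ₜ
        restrictElt k s ((T.vertices ∩ descendants e) \ descendants e')) ⊗ₜ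
          restrictElt k s (T.vertices \ descendants e)) = cutTerm k s e' e := by
  have hsub : descendants e' ⊆ descendants e := descendants_subset_descendants.2 h
  rw [TensorProduct.assoc_tmul, cutTerm, Set.inter_assoc, Set.inter_eq_right.2 hsub,
    Set.inter_sdiff_right_comm, Set.sdiff_sdiff, Set.union_eq_right.2 hsub]

theorem assoc_rTensor_cutSum (s : Φ.F T) :
    TensorProduct.assoc k _ _ _ (LinearMap.rTensor (TrtS k Φ) (rhoS k Φ)
      (cutSum k s T.vertices)) =
      ∑ e ∈ T.edges, ∑ e' ∈ T.edges with e' <+: e ∧ e ≠ e', cutTerm k s e e' := by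
  calc
    _ = ∑ e ∈ T.edges, ∑ e' ∈ T.edges with e <+: e' ∧ e' ≠ e, cutTerm k s e' e := by
      rw [cutSum, T.edgesWithin_vertices, map_sum, map_sum]
      refine Finset.sum_congr rfl fun e he => ?_
      have hv := (PTree.mem_edges.1 he).1
      rw [LinearMap.rTensor_tmul, rhoS_restrictElt k s (PTree.isSubtree_inter_descendants hv),
        cutSum, PTree.edgesWithin_inter_descendants hv, TensorProduct.sum_tmul, map_sum]
      exact Finset.sum_congr rfl fun e' he' =>
        assoc_tmul_eq_cutTerm k s (Finset.mem_filter.1 he').2.1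
    _ = _ := Finset.sum_comm' fun e e' => by simp only [Finset.mem_filter]; tauto

theorem lTensor_cutSum (s : Φ.F T) :
    LinearMap.lTensor (TrtS k Φ) (rhoS k Φ) (cutSum k s T.vertices) =
      ∑ e ∈ T.edges, ∑ e' ∈ T.edges with ¬ e <+: e', cutTerm k s e e' := by
  rw [cutSum, T.edgesWithin_vertices, map_sum]
  refine Finset.sum_congr rfl fun e he => ?_
  have hne := (PTree.mem_edges.1 he).2
  rw [LinearMap.lTensor_tmul, rhoS_restrictElt k s (PTree.isSubtree_sdiff_descendants hne),
    cutSum, PTree.edgesWithin_sdiff_descendants hne, TensorProduct.tmul_sum]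
  rfl

/-- The sum of the terms `cutTerm k s e e'` over the pairs of edges neither of which is an ancestor
of the other. -/
def incomparableCutSum (s : Φ.F T) : TrtS k Φ ⊗[k] (TrtS k Φ ⊗[k] TrtS k Φ) :=
  ∑ e ∈ T.edges, ∑ e' ∈ T.edges with ¬ e <+: e' ∧ ¬ e' <+: e, cutTerm k s e e'

theorem tau12_incomparableCutSum (s : Φ.F T) :
    tau12 k (TrtS k Φ) (incomparableCutSum k s) = incomparableCutSum k s := by
  calc
    _ = ∑ e ∈ T.edges, ∑ e' ∈ T.edges with ¬ e <+: e' ∧ ¬ e' <+: e, cutTerm k s e' e := by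
      simp only [incomparableCutSum, map_sum]
      refine Finset.sum_congr rfl fun e _ => Finset.sum_congr rfl fun e' he' => ?_
      obtain ⟨-, h, h'⟩ := Finset.mem_filter.1 he'
      exact tau12_cutTerm k s h h'
    _ = _ := Finset.sum_comm' fun e e' => by simp only [Finset.mem_filter]; tauto

theorem sum_not_prefix_eq_add {A : Type*} [AddCommMonoid A] (E : Finset (List ℕ)) (e : List ℕ)
    (F : List ℕ → A) :
    ∑ e' ∈ E with ¬ e <+: e', F e' =
      ∑ e' ∈ E with e' <+: e ∧ e ≠ e', F e' + ∑ e' ∈ E with ¬ e <+: e' ∧ ¬ e' <+: e, F e' := by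
  have hproper : ∀ e', ¬ e <+: e' ∧ e' <+: e ↔ e' <+: e ∧ e ≠ e' := fun e' =>
    ⟨fun h => ⟨h.2, fun heq => h.1 (heq ▸ List.prefix_rfl)⟩,
      fun h => ⟨fun h' => h.2 (h'.eq_of_length_le h.1.length_le), h.1⟩⟩
  rw [← Finset.sum_filter_add_sum_filter_not _ (· <+: e), Finset.filter_filter,
    Finset.filter_filter]
  simp only [hproper]

theorem coassociator_rhoS_single_isoClass (s : Φ.F T) :
    coassociator (rhoS k Φ) (Finsupp.single (isoClass s) 1) = incomparableCutSum k s := by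
  rw [coassociator_apply, rhoS_single_isoClass, assoc_rTensor_cutSum, lTensor_cutSum]
  simp only [sum_not_prefix_eq_add, Finset.sum_add_distrib]
  exact add_sub_cancel_left (G := TrtS k Φ ⊗[k] (TrtS k Φ ⊗[k] TrtS k Φ)) _ _

end CutTerm

/-- For every rooted tree-structure `Φ`, the map `ρ` is a (left)
pre-Lie comultiplication on `T_rt(Φ)`. -/
theorem rhoS_isPreLieComul : IsPreLieComul (rhoS k Φ) := by
  refine isPreLieComul_iff_tau12_comp_coassociator.2 (Finsupp.basisSingleOne.ext fun q => ?_)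
  obtain ⟨T, s, rfl⟩ := exists_eq_isoClass q
  rw [Finsupp.coe_basisSingleOne, LinearMap.comp_apply, coassociator_rhoS_single_isoClass,
    tau12_incomparableCutSum]

end
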